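/- arXiv:1101.3948 — 3 statements merged into one kernel-verified Lean document; each statement's English description precedes it below -/
import Mathlib

section
/- Let n, k be positive integers with k ≥ n+1, and let f : ℕ≥1 → ℂ be a function such that the multiple L-value L(𝐤, f, J) = Σ_{m₁,…,mₙ≥1} f(Σ_{j∈J} m_j) / (m₁^{k₁} (m₁+m₂)^{k₂} ⋯ (m₁+⋯+mₙ)^{kₙ}) converges absolutely for every nonempty subset J ⊆ {1,…,n} and every 𝐤 ∈ I(k, max J), and such that Σ_{m≥1} f(m)/m^k converges absolutely. Then the sum formula Σ_{∅≠J⊆{1,…,n}} Σ_{𝐤∈I(k, max J)} (−1)^{|J|−1} L(𝐤, f, J) = Σ_{m=1}^∞ f(m)/m^k holds. -/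
open Finset

/-- `PS p j` is the partial sum `p₁ + ⋯ + p_j` of the positive integers
`pᵢ = p (i-1) + 1` encoded by `p : Fin N → ℕ`. -/
def PS {N : ℕ} (p : Fin N → ℕ) (j : ℕ) : ℕ :=
  ∑ i ∈ Finset.univ.filter (fun i : Fin N => (i : ℕ) < j), (p i + 1)

/-- `Ikr n k r` is the set `I(k,r)` of tuples `(k₁,…,kₙ)` of positive integers with
`kₙ ≥ 2`, `k₁ + ⋯ + kₙ = k` and `k₁ = ⋯ = k_{r-1} = 1`; the tuple is encoded as
`kv : Fin n → ℕ` with `k_j = kv (j-1)`. -/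
def Ikr (n k r : ℕ) : Finset (Fin n → ℕ) :=
  (Fintype.piFinset fun _ : Fin n => Finset.range (k + 1)).filter fun kv =>
    (∀ i, 1 ≤ kv i) ∧ (∀ i : Fin n, (i : ℕ) = n - 1 → 2 ≤ kv i) ∧
      (∑ i, kv i) = k ∧ ∀ i : Fin n, (i : ℕ) + 2 ≤ r → kv i = 1

/-- The multiple `L`-value `L(𝐤, f, J)`, where `mᵢ = mv (i-1) + 1` ranges over
positive integers and `m₁ + ⋯ + m_j = PS mv j`. -/
noncomputable def LVal (n : ℕ) (kv : Fin n → ℕ) (f : ℕ → ℂ) (J : Finset (Fin n)) : ℂ :=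
  ∑' mv : Fin n → ℕ,
    f (∑ j ∈ J, (mv j + 1)) / ∏ i : Fin n, ((PS mv ((i : ℕ) + 1) : ℕ) : ℂ) ^ kv i

/-!
Encode a pair `(J, m)` as a lattice path whose `i`-th step has length `mᵢ` and goes in the first
direction if `i ∈ J`, in the second one otherwise. If the path is at `(Aᵢ, Bᵢ)` after `i` steps and
ends at `(N, B)`, then `m₁ + ⋯ + mᵢ = Aᵢ + Bᵢ`, the argument of `f` is `N`, and `Aᵢ = N` exactly for
`i ≥ max J`. Hence the sum over `𝐤 ∈ I(k, max J)` is a coefficient of the product of the power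
series `(Aᵢ + Bᵢ - [Aᵢ = N] X)⁻¹`, divided by `N + B`.

Each of these denominators is a function of `Aᵢ` plus a function of `Bᵢ`. As for a product of
iterated sums, the sum over all paths with a given endpoint therefore decouples into a sum over
chains `0 < a₁ < ⋯ < N` times a sum over chains `0 < b₁ < ⋯ < B`. Up to a power of `N`, the
`a`-chains, taken with the signs `(-1) ^ |J|`, contribute the coefficients of `∏_{i<N} (1 - X/i)`,
and summing the `b`-chains against `N / (N + B)` contributes those of `∏_{i≤N} (1 - X/i)⁻¹`. The
product of the two series is `(1 - X/N)⁻¹`, and what remains is `f(N) / N ^ k`.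
-/

/-! ### Abel summation -/

open Filter Topology in
theorem hasSum_sub_succ_of_antitone {g : ℕ → ℝ} (hg : Antitone g) (hlim : Tendsto g atTop (𝓝 0))
    (b : ℕ) : HasSum (fun c => if b ≤ c then g c - g (c + 1) else 0) (g b) := by
  have hnonneg (c : ℕ) : 0 ≤ if b ≤ c then g c - g (c + 1) else 0 := by
    split_ifs
    · exact sub_nonneg.2 (hg c.le_succ)
    · exact le_rfl
  rw [hasSum_iff_tendsto_nat_of_nonneg hnonneg, ← tendsto_add_atTop_iff_nat b]
  have hpartial (M : ℕ) :
      ∑ c ∈ range (M + b), (if b ≤ c then g c - g (c + 1) else 0) = g b - g (M + b) := by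
    induction M with
    | zero => simpa using sum_eq_zero fun c hc => if_neg (not_le.2 (mem_range.1 hc))
    | succ M ih => rw [add_right_comm, sum_range_succ, ih, if_pos (by lia)]; ring
  simp only [hpartial]
  simpa using tendsto_const_nhds.sub ((tendsto_add_atTop_iff_nat b).2 hlim)

open Filter Topology in
theorem hasSum_sum_range_succ_mul_sub {a g : ℕ → ℝ} {s : ℝ} (ha : 0 ≤ a) (hg : Antitone g)
    (hlim : Tendsto g atTop (𝓝 0)) (h : HasSum (fun b => a b * g b) s) :
    HasSum (fun c => (∑ b ∈ range (c + 1), a b) * (g c - g (c + 1))) s := by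
  let u : ℕ × ℕ → ℝ := fun x => a x.1 * if x.1 ≤ x.2 then g x.2 - g (x.2 + 1) else 0
  have hrow (b : ℕ) : HasSum (fun c => u (b, c)) (a b * g b) :=
    (hasSum_sub_succ_of_antitone hg hlim b).mul_left _
  have hcol (c : ℕ) :
      HasSum (fun b => u (b, c)) ((∑ b ∈ range (c + 1), a b) * (g c - g (c + 1))) := by
    rw [sum_mul]
    have hzero (b : ℕ) (hb : b ∉ range (c + 1)) : u (b, c) = 0 := by
      simp [u, not_le.2 (Nat.lt_of_succ_le (not_lt.1 (mem_range.not.1 hb)))]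
    convert (hasSum_sum_of_ne_finset_zero hzero : HasSum _ _) using 1
    exact sum_congr rfl fun b hb => by simp [u, Nat.lt_succ_iff.1 (mem_range.1 hb)]
  have hnonneg : 0 ≤ u := fun x =>
    mul_nonneg (ha x.1) <| by
      split_ifs
      exacts [sub_nonneg.2 (hg x.2.le_succ), le_rfl]
  have hu : Summable u := by
    rw [summable_prod_of_nonneg hnonneg]
    refine ⟨fun b => (hrow b).summable, ?_⟩
    simpa only [(hrow _).tsum_eq] using h.summable
  have hs : HasSum u s := (hu.hasSum.prod_fiberwise hrow).unique h ▸ hu.hasSum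
  exact ((Equiv.prodComm ℕ ℕ).hasSum_iff.2 hs).prod_fiberwise hcol

/-! ### Sums over chains -/

section ChainSum
variable {R S : Type*} [Semiring R] [Semiring S]

/-- The sum of `v m₁ ⋯ v m_j` over all chains `0 < m₁ < ⋯ < m_j = m`; the empty chain ends
at `0`. -/
def chainSum (v : ℕ → R) : ℕ → ℕ → R
  | 0, m => if m = 0 then 1 else 0
  | j + 1, m => v m * ∑ i ∈ range m, chainSum v j i

theorem chainSum_succ_zero (v : ℕ → R) (j : ℕ) : chainSum v (j + 1) 0 = 0 := by
  simp [chainSum]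

theorem map_chainSum (φ : R →+* S) (v : ℕ → R) (j m : ℕ) :
    φ (chainSum v j m) = chainSum (fun i => φ (v i)) j m := by
  induction j generalizing m with
  | zero => simp [chainSum, apply_ite φ]
  | succ j ih => simp [chainSum, ih]

theorem chainSum_congr {v v' : ℕ → R} {j m : ℕ} (h : ∀ i ≤ m, v i = v' i) :
    chainSum v j m = chainSum v' j m := by
  induction j generalizing m with
  | zero => rfl
  | succ j ih =>
    simp only [chainSum]
    rw [h m le_rfl, sum_congr rfl fun i hi => ih fun l hl => h l (by grind)]

theorem chainSum_nonneg [PartialOrder R] [IsOrderedRing R] {v : ℕ → R} (hv : ∀ m, 0 ≤ v m)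
    (j m : ℕ) : 0 ≤ chainSum v j m := by
  induction j generalizing m with
  | zero =>
    unfold chainSum
    split_ifs
    exacts [zero_le_one, le_rfl]
  | succ j ih => exact mul_nonneg (hv m) (sum_nonneg fun i _ => ih i)

theorem mul_chainSum_succ {ε : R} {u v : ℕ → R} (hu : u 0 = 0)
    (huv : ∀ m ≠ 0, u m * v m = ε) (j m : ℕ) :
    u m * chainSum v (j + 1) m = ε * ∑ i ∈ range m, chainSum v j i := by
  rcases eq_or_ne m 0 with rfl | hm
  · simp [hu]
  · rw [chainSum, ← mul_assoc, huv m hm]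

theorem mul_chainSum_zero {u : ℕ → R} (v : ℕ → R) (hu : u 0 = 0) (m : ℕ) :
    u m * chainSum v 0 m = 0 := by
  by_cases hm : m = 0 <;> simp [chainSum, hm, hu]

open PowerSeries in
theorem mk_sum_chainSum {R : Type*} [CommSemiring R] (v : ℕ → R) (M : ℕ) :
    mk (fun j => ∑ i ∈ range (M + 1), chainSum v j i) = ∏ i ∈ range M, (1 + C (v (i + 1)) * X) := by
  induction M with
  | zero =>
    ext j
    cases j <;> simp [chainSum, coeff_one]
  | succ M ih =>
    rw [prod_range_succ, ← ih]
    ext j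
    rw [mul_add, mul_one, ← mul_assoc]
    cases j with
    | zero => simp [sum_range_succ _ (M + 1), chainSum]
    | succ j =>
      rw [map_add, coeff_succ_mul_X, coeff_mul_C]
      simp [sum_range_succ _ (M + 1), chainSum, mul_comm]

end ChainSum

/-! ### Products of the factors `1 - X / i` -/

section HarmonicProd
open PowerSeries

section Field
variable {K : Type*} [Field K]

theorem inv_C_sub_X {a : K} (ha : a ≠ 0) :
    (C a - X : K⟦X⟧)⁻¹ = mk fun d => a⁻¹ ^ (d + 1) := by
  rw [PowerSeries.inv_eq_iff_mul_eq_one (by simpa)]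
  convert invUnitsSub_mul_sub (Units.mk0 a ha) using 2
  · ext; simp
  · rw [Units.val_mk0]

theorem inv_one_sub_C_mul_X (a : K) : (1 - C a * X : K⟦X⟧)⁻¹ = mk fun d => a ^ d := by
  rw [PowerSeries.inv_eq_iff_mul_eq_one (by simp)]
  convert congrArg (rescale a) (mk_one_mul_one_sub_eq_one K) using 1
  · rw [map_mul, rescale_mk]
    simp [rescale_X]
  · simp

end Field

/-- The polynomial `∏_{1 ≤ i ≤ M} (1 - X / i)`, as a power series so that it can be inverted: its
coefficients are the signed elementary symmetric functions of `1, 1/2, …, 1/M`, those of its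
inverse the complete homogeneous ones. -/
noncomputable def harmonicProd (M : ℕ) : ℝ⟦X⟧ := ∏ i ∈ range M, (1 - C ((i + 1 : ℝ)⁻¹) * X)

theorem mk_sum_chainSum_neg_inv (M : ℕ) :
    mk (fun j => ∑ i ∈ range (M + 1), chainSum (fun m => -(m : ℝ)⁻¹) j i) = harmonicProd M := by
  simp [mk_sum_chainSum, harmonicProd, sub_eq_add_neg]

theorem harmonicProd_succ (M : ℕ) :
    harmonicProd (M + 1) = harmonicProd M * (1 - C ((M + 1 : ℝ)⁻¹) * X) :=
  prod_range_succ _ M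

theorem constantCoeff_harmonicProd (M : ℕ) : constantCoeff (harmonicProd M) = 1 := by
  simp [harmonicProd, map_prod]

theorem harmonicProd_mul_inv_succ (M : ℕ) :
    harmonicProd M * (harmonicProd (M + 1))⁻¹ = mk fun j => (M + 1 : ℝ)⁻¹ ^ j := by
  rw [harmonicProd_succ, PowerSeries.mul_inv_rev, mul_left_comm, PowerSeries.mul_inv_cancel,
    mul_one, inv_one_sub_C_mul_X]
  simp [constantCoeff_harmonicProd]

theorem coeff_succ_inv_harmonicProd (M l : ℕ) :
    coeff (l + 1) (harmonicProd (M + 1))⁻¹ =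
      coeff (l + 1) (harmonicProd M)⁻¹ + coeff l (harmonicProd (M + 1))⁻¹ / (M + 1) := by
  have h : (harmonicProd M)⁻¹ = (harmonicProd (M + 1))⁻¹ * (1 - C ((M + 1 : ℝ)⁻¹) * X) := by
    rw [harmonicProd_succ, PowerSeries.mul_inv_rev, mul_right_comm, PowerSeries.inv_mul_cancel,
      one_mul]
    simp
  rw [h, mul_sub, mul_one, ← mul_assoc, map_sub, coeff_succ_mul_X, coeff_mul_C]
  ring

theorem natCast_mul_chainSum_inv (l m : ℕ) :
    m * chainSum (fun i => (i : ℝ)⁻¹) (l + 1) m =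
      ∑ i ∈ range m, chainSum (fun i => (i : ℝ)⁻¹) l i := by
  rcases eq_or_ne m 0 with rfl | hm
  · simp
  · exact mul_inv_cancel_left₀ (Nat.cast_ne_zero.2 hm) _

theorem hasSum_chainSum_inv_succ_mul_sub {l N : ℕ} {s : ℝ}
    (h : HasSum (fun m : ℕ => chainSum (fun i => (i : ℝ)⁻¹) l m * ((N + 1) / (N + 1 + m))) s) :
    HasSum (fun m : ℕ => chainSum (fun i => (i : ℝ)⁻¹) (l + 1) m *
      ((N + 1) / (N + 1 + m) - N / (N + m))) (s / (N + 1)) := by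
  have hanti : Antitone fun m : ℕ => ((N : ℝ) + 1 + m)⁻¹ := fun m m' hm => by
    dsimp only; gcongr
  have hlim : Filter.Tendsto (fun m : ℕ => ((N : ℝ) + 1 + m)⁻¹) Filter.atTop (nhds 0) :=
    (Filter.tendsto_atTop_add_const_left _ _ tendsto_natCast_atTop_atTop).inv_tendsto_atTop
  have hweighted : HasSum (fun m : ℕ => chainSum (fun i => (i : ℝ)⁻¹) l m * ((N : ℝ) + 1 + m)⁻¹)
      (s / (N + 1)) := by
    refine (h.div_const (N + 1 : ℝ)).congr_fun fun m => ?_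
    field_simp
  have habel :=
    hasSum_sum_range_succ_mul_sub (chainSum_nonneg (by simp) l) hanti hlim hweighted
  rw [← hasSum_nat_add_iff' 1, sum_range_one, chainSum_succ_zero, zero_mul, sub_zero]
  refine habel.congr_fun fun m => ?_
  rw [← natCast_mul_chainSum_inv]
  push_cast
  field_simp
  ring

theorem hasSum_chainSum_inv_mul (l M : ℕ) :
    HasSum (fun m : ℕ => chainSum (fun i => (i : ℝ)⁻¹) l m * ((M + 1) / (M + 1 + m)))
      (coeff l (harmonicProd (M + 1))⁻¹) := by
  induction l generalizing M with
  | zero =>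
    convert hasSum_single (f := fun m : ℕ =>
      chainSum (fun i => (i : ℝ)⁻¹) 0 m * ((M + 1) / (M + 1 + m))) 0 ?_ using 1
    · have : (M + 1 : ℝ) ≠ 0 := by positivity
      simp [chainSum, constantCoeff_harmonicProd, this]
    · intro m hm
      simp [chainSum, hm]
  | succ l ihl =>
    suffices ∀ N : ℕ, HasSum (fun m : ℕ => chainSum (fun i => (i : ℝ)⁻¹) (l + 1) m *
        (N / (N + m))) (coeff (l + 1) (harmonicProd N)⁻¹) by
      exact_mod_cast this (M + 1)
    intro N
    induction N with
    | zero => simp [harmonicProd]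
    | succ N ih =>
      rw [coeff_succ_inv_harmonicProd]
      refine (ih.add (hasSum_chainSum_inv_succ_mul_sub (ihl N))).congr_fun fun m => ?_
      push_cast
      ring

end HarmonicProd

/-! ### Lattice paths -/

/-- The index `max J`, counted from `1`; it is `0` for `J = ∅`. -/
abbrev maxIndex {n : ℕ} (J : Finset (Fin n)) : ℕ := J.sup fun j => (j : ℕ) + 1

/-- Lattice paths with `n` steps of positive length in one of two directions, labelled by `true`
and `false`. As for `PS`, a step of length `m + 1` is encoded by `m`. -/
abbrev LatticePath (n : ℕ) : Type := Fin n → Bool × ℕ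

namespace LatticePath
variable {n : ℕ}

/-- The point reached after the first `j` steps, given by its coordinate in each direction. -/
def position (p : LatticePath n) (j : ℕ) (b : Bool) : ℕ :=
  ∑ i : Fin n with (p i).1 = b ∧ (i : ℕ) < j, ((p i).2 + 1)

/-- The set of steps in the direction `true`; it corresponds to the index set `J`. -/
def support (p : LatticePath n) : Finset (Fin n) := {i | (p i).1 = true}

/-- The finset of paths with `n` steps from the origin to `c`. -/
def endingAt (n : ℕ) (c : Bool → ℕ) : Finset (LatticePath n) :=
  {p ∈ Fintype.piFinset fun _ => univ ×ˢ range (c true + c false) | p.position n = c}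

theorem position_length (p : LatticePath n) (b : Bool) :
    p.position n b = ∑ i with (p i).1 = b, ((p i).2 + 1) := by
  simp [position]

theorem position_snoc_of_le (p : LatticePath n) (s : Bool × ℕ) {j : ℕ} (hj : j ≤ n) :
    position (Fin.snoc p s : LatticePath (n + 1)) j = p.position j := by
  funext b
  simp [position, sum_filter, Fin.sum_univ_castSucc, hj.not_gt]

theorem position_snoc_length (p : LatticePath n) (s : Bool × ℕ) :
    position (Fin.snoc p s : LatticePath (n + 1)) (n + 1) =
      p.position n + Pi.single s.1 (s.2 + 1) := by
  funext b
  simp [position, sum_filter, Fin.sum_univ_castSucc, Pi.single_apply, eq_comm,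
    fun i : Fin n => i.2.le]

theorem PS_eq_position (p : LatticePath n) (j : ℕ) :
    PS (fun i => (p i).2) j = p.position j true + p.position j false := by
  simp only [PS, position, sum_filter, ← sum_add_distrib]
  refine sum_congr rfl fun i _ => ?_
  cases (p i).1 <;> simp

@[simp]
theorem mem_endingAt {c : Bool → ℕ} {p : LatticePath n} : p ∈ endingAt n c ↔ p.position n = c := by
  refine ⟨fun h => (mem_filter.1 h).2, fun h => mem_filter.2 ⟨?_, h⟩⟩
  have hle (i : Fin n) : (p i).2 + 1 ≤ PS (fun i => (p i).2) n :=
    single_le_sum (f := fun i => (p i).2 + 1) (fun _ _ => Nat.zero_le _) (by simp)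
  simpa [PS_eq_position, h, Nat.succ_le_iff] using hle

theorem snoc_mem_endingAt {c : Bool → ℕ} {q : LatticePath n} {b : Bool} {i : ℕ} (hi : i < c b)
    (hq : q ∈ endingAt n (Function.update c b i)) :
    (Fin.snoc q (b, c b - i - 1) : LatticePath (n + 1)) ∈ endingAt (n + 1) c := by
  rw [mem_endingAt, position_snoc_length, mem_endingAt.1 hq]
  funext b'
  rcases eq_or_ne b' b with rfl | hb
  · simp only [Pi.add_apply, Function.update_self, Pi.single_eq_same]
    lia
  · simp [hb]

theorem init_mem_endingAt {c : Bool → ℕ} {p : LatticePath (n + 1)} (hp : p ∈ endingAt (n + 1) c) :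
    (Fin.init p : LatticePath n) ∈ endingAt n (Function.update c (p (Fin.last n)).1
      (position (Fin.init p : LatticePath n) n (p (Fin.last n)).1)) := by
  have h := position_snoc_length (Fin.init p) (p (Fin.last n))
  rw [Fin.snoc_init_self, mem_endingAt.1 hp] at h
  rw [mem_endingAt, h, Function.eq_update_iff]
  exact ⟨rfl, fun b' hb => by simp [hb]⟩

theorem position_init_add {c : Bool → ℕ} {p : LatticePath (n + 1)} (hp : p ∈ endingAt (n + 1) c) :
    position (Fin.init p : LatticePath n) n (p (Fin.last n)).1 + (p (Fin.last n)).2 + 1 =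
      c (p (Fin.last n)).1 := by
  have h := congrFun (position_snoc_length (Fin.init p) (p (Fin.last n))) (p (Fin.last n)).1
  rw [Fin.snoc_init_self, mem_endingAt.1 hp, Pi.add_apply, Pi.single_eq_same] at h
  rw [h, add_assoc]

theorem endingAt_zero (c : Bool → ℕ) : endingAt 0 c = if c = 0 then univ else ∅ := by
  ext p
  have hpos : p.position 0 = 0 := by
    funext b
    simp [position]
  rw [mem_endingAt, hpos, eq_comm]
  split_ifs with hc <;> simp [hc, eq_iff_true_of_subsingleton]

theorem sum_endingAt_succ {M : Type*} [AddCommMonoid M] (c : Bool → ℕ)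
    (g : LatticePath (n + 1) → M) :
    ∑ p ∈ endingAt (n + 1) c, g p =
      ∑ b, ∑ i ∈ range (c b), ∑ q ∈ endingAt n (Function.update c b i),
        g (Fin.snoc q (b, c b - i - 1)) := by
  simp only [sum_sigma']
  have hleft (p : LatticePath (n + 1)) (hp : p ∈ endingAt (n + 1) c) :
      (Fin.snoc (Fin.init p) ((p (Fin.last n)).1, c (p (Fin.last n)).1 -
        position (Fin.init p : LatticePath n) n (p (Fin.last n)).1 - 1) : LatticePath (n + 1)) =
        p := by
    have hstep : c (p (Fin.last n)).1 -
        position (Fin.init p : LatticePath n) n (p (Fin.last n)).1 - 1 = (p (Fin.last n)).2 := by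
      have := position_init_add hp
      lia
    rw [hstep, Prod.mk.eta, Fin.snoc_init_self]
  refine sum_bij'
    (fun p _ => ⟨(p (Fin.last n)).1, position (Fin.init p : LatticePath n) n (p (Fin.last n)).1,
      Fin.init p⟩)
    (fun x _ => Fin.snoc x.2.2 (x.1, c x.1 - x.2.1 - 1)) (fun p hp => ?_) ?_ hleft ?_
    fun p hp => congrArg g (hleft p hp).symm
  · simp only [mem_sigma, mem_univ, mem_range, true_and]
    exact ⟨by have := position_init_add hp; lia, init_mem_endingAt hp⟩
  · rintro ⟨b, i, q⟩ hx
    simp only [mem_sigma, mem_univ, mem_range, true_and] at hx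
    exact snoc_mem_endingAt hx.1 hx.2
  · rintro ⟨b, i, q⟩ hx
    simp only [mem_sigma, mem_univ, mem_range, true_and] at hx
    simp [mem_endingAt.1 hx.2]

theorem mem_support {p : LatticePath n} {i : Fin n} : i ∈ p.support ↔ (p i).1 = true := by
  simp [support]

theorem position_eq_position_length_iff (p : LatticePath n) (j : ℕ) (b : Bool) :
    p.position j b = p.position n b ↔ ∀ i, (p i).1 = b → (i : ℕ) < j := by
  rw [position_length]
  refine ⟨fun h => ?_, fun h => sum_congr (filter_congr fun i _ => ?_) fun _ _ => rfl⟩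
  · by_contra! ⟨i, hi, hji⟩
    refine h.not_lt (sum_lt_sum_of_subset (fun i hi => ?_) (i := i) (by simpa using hi)
      (by simpa [hi] using hji) (Nat.succ_pos _) fun _ _ _ => Nat.zero_le _)
    exact mem_filter.2 ⟨mem_univ i, (mem_filter.1 hi).2.1⟩
  · exact and_iff_left_of_imp (h i)

theorem position_succ_true_eq_iff (p : LatticePath n) (i : ℕ) :
    p.position (i + 1) true = p.position n true ↔
      ¬ i + 2 ≤ maxIndex p.support := by
  rw [position_eq_position_length_iff, not_le, Nat.lt_succ_iff, Finset.sup_le_iff]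
  simp only [mem_support, Nat.succ_le_succ_iff, Nat.lt_succ_iff]

theorem support_nonempty_iff {p : LatticePath n} :
    p.support.Nonempty ↔ p.position n true ≠ 0 := by
  simp [position_length, support, filter_nonempty_iff]

/-- The path whose `i`-th step has length `m i + 1`, in the direction `true` exactly for
`i ∈ J`. -/
def ofSupport (J : Finset (Fin n)) (m : Fin n → ℕ) : LatticePath n := fun i => (i ∈ J, m i)

theorem support_ofSupport (J : Finset (Fin n)) (m : Fin n → ℕ) : (ofSupport J m).support = J := by
  ext i
  simp [mem_support, ofSupport]

theorem hasSum_support {E : Type*} [AddCommMonoid E] [TopologicalSpace E] [ContinuousAdd E]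
    {g : Finset (Fin n) → (Fin n → ℕ) → E} {s : Finset (Fin n) → E}
    (h : ∀ J, HasSum (g J) (s J)) :
    HasSum (fun p : LatticePath n => g p.support fun i => (p i).2) (∑ J, s J) := by
  have hinj (J : Finset (Fin n)) : Function.Injective (ofSupport J) := fun m m' hm =>
    funext fun i => congrArg Prod.snd (congrFun hm i)
  have hrange {J : Finset (Fin n)} {p : LatticePath n} (hp : p.support = J) :
      ofSupport J (fun i => (p i).2) = p := by
    funext i
    simp [ofSupport, ← hp, mem_support]
  have hJ (J : Finset (Fin n)) : HasSum (fun p : LatticePath n =>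
      if p.support = J then g J (fun i => (p i).2) else 0) (s J) := by
    rw [← (hinj J).hasSum_iff fun p hp => if_neg fun hpJ => hp ⟨_, hrange hpJ⟩]
    refine (h J).congr_fun fun m => ?_
    simp [support_ofSupport, ofSupport]
  simpa using hasSum_sum fun J (_ : J ∈ univ) => hJ J

theorem hasSum_sum_endingAt {E : Type*} [AddCommMonoid E] [TopologicalSpace E] [ContinuousAdd E]
    [RegularSpace E] {g : LatticePath n → E} {s : E} (h : HasSum g s) :
    HasSum (fun c : ℕ × ℕ => ∑ p ∈ endingAt n fun b => cond b c.1 c.2, g p) s := by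
  have hfiber (c : Bool → ℕ) :
      HasSum (fun p : {p : LatticePath n // p.position n = c} => g p) (∑ p ∈ endingAt n c, g p) :=
    (Equiv.subtypeEquivRight fun _ => mem_endingAt).hasSum_iff.1 ((endingAt n c).hasSum g)
  have hBool := ((Equiv.sigmaFiberEquiv fun p : LatticePath n => p.position n).hasSum_iff.2 h).sigma
    hfiber
  let e : ℕ × ℕ ≃ (Bool → ℕ) :=
    (Equiv.prodComm ℕ ℕ).trans (Equiv.boolArrowEquivProd ℕ).symm
  refine (e.hasSum_iff.2 hBool).congr_fun fun c => ?_
  simp only [e, Function.comp_apply]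
  congr 2
  funext b
  cases b <;> rfl

section Weight
variable {R : Type*} [CommSemiring R]

/-- The product over the steps of a factor `ε b` for the direction `b` of the step and a factor
`w c` for the point `c` reached by it. -/
def weight (ε : Bool → R) (w : (Bool → ℕ) → R) (p : LatticePath n) : R :=
  ∏ i, ε (p i).1 * w (p.position (i + 1))

theorem weight_snoc (ε : Bool → R) (w : (Bool → ℕ) → R) (p : LatticePath n) (s : Bool × ℕ) :
    weight ε w (Fin.snoc p s : LatticePath (n + 1)) =
      weight ε w p * (ε s.1 * w (position (Fin.snoc p s : LatticePath (n + 1)) (n + 1))) := by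
  have hpos (i : Fin n) :
      position (Fin.snoc p s : LatticePath (n + 1)) (i + 1) = p.position (i + 1) :=
    position_snoc_of_le p s i.2
  simp [weight, Fin.prod_univ_castSucc, hpos]

theorem sum_weight_endingAt_succ (ε : Bool → R) (w : (Bool → ℕ) → R) (c : Bool → ℕ) :
    ∑ p ∈ endingAt (n + 1) c, weight ε w p =
      w c * ∑ b, ε b * ∑ i ∈ range (c b), ∑ q ∈ endingAt n (Function.update c b i),
        weight ε w q := by
  rw [sum_endingAt_succ]
  simp only [mul_sum]
  refine sum_congr rfl fun b _ => sum_congr rfl fun i hi => sum_congr rfl fun q hq => ?_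
  rw [weight_snoc, mem_endingAt.1 (snoc_mem_endingAt (mem_range.1 hi) hq)]
  ring

/-- The sum over the pairs of chains with `n` elements in total, one ending at `c true` and the
other at `c false`. -/
def chainPairSum (v : Bool → ℕ → R) (n : ℕ) (c : Bool → ℕ) : R :=
  ∑ x ∈ antidiagonal n, chainSum (v true) x.1 (c true) * chainSum (v false) x.2 (c false)

theorem chainPairSum_zero (v : Bool → ℕ → R) (c : Bool → ℕ) :
    chainPairSum v 0 c = if c = 0 then 1 else 0 := by
  simp [chainPairSum, chainSum, funext_iff, ← ite_and]

theorem chainPairSum_succ_zero (v : Bool → ℕ → R) (n : ℕ) : chainPairSum v (n + 1) 0 = 0 := by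
  refine sum_eq_zero fun x hx => ?_
  rcases x with ⟨_ | a, _ | b⟩
  · simp at hx
  all_goals simp [chainSum_succ_zero]

theorem mul_chainPairSum_succ {ε : Bool → R} {u v : Bool → ℕ → R} (hu : ∀ b, u b 0 = 0)
    (huv : ∀ b, ∀ m ≠ 0, u b m * v b m = ε b) (n : ℕ) (c : Bool → ℕ) (b : Bool) :
    u b (c b) * chainPairSum v (n + 1) c =
      ε b * ∑ i ∈ range (c b), chainPairSum v n (Function.update c b i) := by
  cases b
  · simp only [chainPairSum, ne_eq, Bool.true_eq_false, not_false_eq_true, Function.update_of_ne,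
      Function.update_self]
    rw [Finset.Nat.sum_antidiagonal_succ', mul_add, mul_left_comm,
      mul_chainSum_zero _ (hu false), mul_zero, zero_add, sum_comm, mul_sum, mul_sum]
    refine sum_congr rfl fun x _ => ?_
    rw [mul_left_comm, mul_chainSum_succ (hu false) (huv false), ← mul_sum, mul_left_comm]
  · simp only [chainPairSum, ne_eq, Bool.false_eq_true, not_false_eq_true, Function.update_of_ne,
      Function.update_self]
    rw [Finset.Nat.sum_antidiagonal_succ, mul_add, ← mul_assoc,
      mul_chainSum_zero _ (hu true), zero_mul, zero_add, sum_comm, mul_sum, mul_sum]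
    refine sum_congr rfl fun x _ => ?_
    rw [← mul_assoc, mul_chainSum_succ (hu true) (huv true), ← sum_mul, mul_assoc]

theorem sum_weight_endingAt {ε : Bool → R} {w : (Bool → ℕ) → R} {u v : Bool → ℕ → R}
    (hu : ∀ b, u b 0 = 0) (huv : ∀ b, ∀ m ≠ 0, u b m * v b m = ε b)
    (hw : ∀ c ≠ 0, w c * ∑ b, u b (c b) = 1) (n : ℕ) (c : Bool → ℕ) :
    ∑ p ∈ endingAt n c, weight ε w p = chainPairSum v n c := by
  induction n generalizing c with
  | zero =>
    rw [endingAt_zero, chainPairSum_zero]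
    split_ifs <;> simp [weight]
  | succ n ih =>
    simp only [sum_weight_endingAt_succ, ih]
    rcases eq_or_ne c 0 with rfl | hc
    · simp [chainPairSum_succ_zero]
    · simp only [← mul_chainPairSum_succ hu huv]
      rw [← sum_mul, ← mul_assoc, hw c hc, one_mul]

end Weight
end LatticePath

/-! ### The generating series of a path -/

section PathSeries
open PowerSeries

/-- The summand for the coordinate `m` in the direction `b` of the denominators
`A + B - [A = N] X`. -/
noncomputable def coordDenom (N : ℕ) (b : Bool) (m : ℕ) : ℝ⟦X⟧ :=
  C (m : ℝ) - if b = true ∧ m = N then X else 0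

/-- The sign `-1` of a step in the direction `true`, which turns the sum over all paths into a sum
with signs `(-1) ^ |J|`. -/
noncomputable def stepSign (b : Bool) : ℝ⟦X⟧ := cond b (-1) 1

/-- The factor contributed by the coordinate `m` to the chains in the direction `b`. -/
noncomputable def stepRatio (N : ℕ) (b : Bool) (m : ℕ) : ℝ⟦X⟧ :=
  stepSign b * (coordDenom N b m)⁻¹

/-- The generating series of a path: up to sign and a factor `1 / (A + B)`, its coefficients are
the sums over the exponents `𝐤` if the path ends at `(A, B)` with `A = N`. -/
noncomputable def pathSeries (N : ℕ) {n : ℕ} (p : LatticePath n) : ℝ⟦X⟧ :=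
  p.weight stepSign fun c => (∑ b, coordDenom N b (c b))⁻¹

theorem constantCoeff_coordDenom (N : ℕ) (b : Bool) (m : ℕ) :
    constantCoeff (coordDenom N b m) = m := by
  simp [coordDenom, apply_ite]

theorem coordDenom_zero {N : ℕ} (hN : N ≠ 0) (b : Bool) : coordDenom N b 0 = 0 := by
  simp [coordDenom, hN.symm]

theorem coordDenom_mul_stepRatio (N : ℕ) (b : Bool) {m : ℕ} (hm : m ≠ 0) :
    coordDenom N b m * stepRatio N b m = stepSign b := by
  rw [stepRatio, mul_left_comm, PowerSeries.mul_inv_cancel, mul_one]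
  simpa [constantCoeff_coordDenom]

theorem sum_pathSeries_endingAt {N : ℕ} (hN : N ≠ 0) (n : ℕ) (c : Bool → ℕ) :
    ∑ p ∈ LatticePath.endingAt n c, pathSeries N p =
      LatticePath.chainPairSum (stepRatio N) n c := by
  refine LatticePath.sum_weight_endingAt (coordDenom_zero hN)
    (fun b _ hm => coordDenom_mul_stepRatio N b hm)
    (fun c hc => PowerSeries.inv_mul_cancel _ ?_) n c
  simpa [constantCoeff_coordDenom, funext_iff, ← Nat.cast_add, and_comm] using hc

theorem chainSum_stepRatio_false (N j m : ℕ) :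
    chainSum (stepRatio N false) j m = C (chainSum (fun i => (i : ℝ)⁻¹) j m) := by
  rw [map_chainSum]
  refine chainSum_congr fun i _ => ?_
  simp [stepRatio, stepSign, coordDenom, C_inv, -map_natCast]

theorem chainSum_stepRatio_true_succ (N j : ℕ) :
    chainSum (stepRatio N true) (j + 1) N =
      -((C (N : ℝ) - X)⁻¹ * C (∑ i ∈ range N, chainSum (fun m => -(m : ℝ)⁻¹) j i)) := by
  have hlt (i : ℕ) (hi : i < N) : stepRatio N true i = C (-(i : ℝ)⁻¹) := by
    simp [stepRatio, stepSign, coordDenom, hi.ne, C_inv, -map_natCast]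
  have hchain (i : ℕ) (hi : i ∈ range N) :
      chainSum (stepRatio N true) j i = C (chainSum (fun m => -(m : ℝ)⁻¹) j i) := by
    rw [map_chainSum]
    exact chainSum_congr fun l hl => hlt l (hl.trans_lt (mem_range.1 hi))
  rw [chainSum, sum_congr rfl hchain, map_sum]
  simp [stepRatio, stepSign, coordDenom]

theorem neg_coeff_sum_pathSeries {N : ℕ} (hN : N ≠ 0) (n d B : ℕ) :
    ∑ p ∈ LatticePath.endingAt (n + 1) (fun b => cond b N B), -coeff d (pathSeries N p) =
      (N : ℝ)⁻¹ ^ (d + 1) * ∑ x ∈ antidiagonal n,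
        (∑ i ∈ range N, chainSum (fun m => -(m : ℝ)⁻¹) x.1 i) *
          chainSum (fun i => (i : ℝ)⁻¹) x.2 B := by
  rw [sum_neg_distrib, ← map_sum, sum_pathSeries_endingAt hN, LatticePath.chainPairSum,
    Finset.Nat.sum_antidiagonal_succ]
  rw [cond_true, cond_false, chainSum, if_neg hN, zero_mul, zero_add]
  simp only [chainSum_stepRatio_true_succ, chainSum_stepRatio_false]
  have hinv : (C (N : ℝ) - X)⁻¹ = mk fun d => (N : ℝ)⁻¹ ^ (d + 1) :=
    inv_C_sub_X (Nat.cast_ne_zero.2 hN)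
  simp only [neg_mul, sum_neg_distrib, map_neg, neg_neg, hinv, map_sum (coeff d), coeff_mul_C,
    coeff_mk, mul_sum (antidiagonal n)]
  simp only [mul_assoc]

theorem hasSum_neg_coeff_pathSeries_div {N : ℕ} (hN : N ≠ 0) (n d : ℕ) :
    HasSum (fun B : ℕ => (∑ p ∈ LatticePath.endingAt (n + 1) (fun b => cond b N B),
      -coeff d (pathSeries N p)) / (N + B : ℝ)) ((N : ℝ)⁻¹ ^ (d + n + 2)) := by
  obtain ⟨M, rfl⟩ := Nat.exists_eq_succ_of_ne_zero hN
  have hterm (x : ℕ × ℕ) := ((hasSum_chainSum_inv_mul x.2 M).mul_left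
    (coeff x.1 (harmonicProd M))).mul_left ((M + 1 : ℝ)⁻¹ ^ (d + 2))
  have hsum := hasSum_sum fun x (_ : x ∈ antidiagonal n) => hterm x
  rw [← mul_sum, ← coeff_mul, harmonicProd_mul_inv_succ, coeff_mk, ← pow_add] at hsum
  rw [Nat.succ_eq_add_one, show d + n + 2 = d + 2 + n by ring, Nat.cast_succ]
  refine hsum.congr_fun fun B => ?_
  rw [neg_coeff_sum_pathSeries hN, mul_sum, sum_div]
  refine sum_congr rfl fun x _ => ?_
  have hpow : (M + 1 : ℝ)⁻¹ ^ (d + 1) = (M + 1 : ℝ)⁻¹ ^ (d + 2) * (M + 1) := by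
    rw [pow_succ _ (d + 1), inv_mul_cancel_right₀ (by positivity)]
  rw [← mk_sum_chainSum_neg_inv, coeff_mk, Nat.cast_succ, hpow]
  ring

end PathSeries

/-! ### Sums over the exponents -/

section Exponents
open PowerSeries

/-- The condition that membership in `Ikr n k r` puts on the `i`-th exponent. -/
abbrev AdmissibleExponent {n : ℕ} (r : ℕ) (i : Fin n) (e : ℕ) : Prop :=
  1 ≤ e ∧ ((i : ℕ) = n - 1 → 2 ≤ e) ∧ ((i : ℕ) + 2 ≤ r → e = 1)

theorem mem_Ikr {n k r : ℕ} {kv : Fin n → ℕ} :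
    kv ∈ Ikr n k r ↔ ∑ i, kv i = k ∧ ∀ i, AdmissibleExponent r i (kv i) := by
  simp only [Ikr, mem_filter, Fintype.mem_piFinset, mem_range, Nat.lt_succ_iff]
  refine ⟨fun ⟨_, h1, h2, hk, h3⟩ => ⟨hk, fun i => ⟨h1 i, h2 i, h3 i⟩⟩, fun ⟨hk, h⟩ => ?_⟩
  exact ⟨fun i => hk ▸ single_le_sum (fun _ _ => Nat.zero_le _) (mem_univ i),
    fun i => (h i).1, fun i => (h i).2.1, hk, fun i => (h i).2.2⟩

variable {R : Type*} [CommSemiring R]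

theorem sum_Ikr_prod_eq_coeff {n : ℕ} (k r : ℕ) (a : Fin n → ℕ → R) :
    ∑ kv ∈ Ikr n k r, ∏ i, a i (kv i) =
      coeff k (∏ i, mk fun e => if AdmissibleExponent r i e then a i e else 0) := by
  have hIkr : Ikr n k r = {kv ∈ piAntidiag (univ : Finset (Fin n)) k |
      ∀ i, AdmissibleExponent r i (kv i)} := by
    ext kv
    simp [mem_Ikr]
  rw [coeff_prod, hIkr, sum_filter]
  refine sum_equiv Finsupp.equivFunOnFinite.symm ?_ ?_
  · simp
  · simp [Fintype.prod_ite_zero]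

/-- The factor of the generating function of `Ikr` at the `i`-th exponent `e`, up to a power of
`X`: the exponent is `1` for `i + 1 < r` and free otherwise. -/
noncomputable def slotSeries (r : ℕ) {n : ℕ} (z : Fin n → R) (i : Fin n) : R⟦X⟧ :=
  if (i : ℕ) + 2 ≤ r then C (z i) else mk fun e => z i ^ (e + 1)

theorem mk_admissibleExponent_castSucc {n : ℕ} (r : ℕ) (z : Fin (n + 1) → R) (i : Fin n) :
    (mk fun e => if AdmissibleExponent r i.castSucc e then z i.castSucc ^ e else 0) =
      slotSeries r z i.castSucc * X := by
  ext e
  have hi : (i : ℕ) ≠ n := i.2.ne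
  rcases e with _ | e
  · simp
  · rw [coeff_succ_mul_X, coeff_mk, slotSeries]
    by_cases hr : (i : ℕ) + 2 ≤ r
    · rcases e with _ | e <;> simp [hi, hr, coeff_C]
    · simp [hi, hr]

theorem mk_admissibleExponent_last {n r : ℕ} (hr : r ≤ n + 1) (z : Fin (n + 1) → R) :
    (mk fun e => if AdmissibleExponent r (Fin.last n) e then z (Fin.last n) ^ e else 0) =
      slotSeries r z (Fin.last n) * C (z (Fin.last n)) * X ^ 2 := by
  ext e
  have hn : ¬ n + 2 ≤ r := by lia
  rcases e with _ | _ | e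
  · simp
  · simp [pow_two, ← mul_assoc, slotSeries, hn]
  · rw [pow_two, ← mul_assoc, coeff_succ_mul_X, coeff_succ_mul_X, coeff_mul_C, coeff_mk, slotSeries]
    simp [hn, pow_succ]

theorem sum_Ikr_prod_pow {n r : ℕ} (hr : r ≤ n + 1) (d : ℕ) (z : Fin (n + 1) → R) :
    ∑ kv ∈ Ikr (n + 1) (d + n + 2) r, ∏ i, z i ^ kv i =
      coeff d (∏ i, slotSeries r z i) * z (Fin.last n) := by
  rw [sum_Ikr_prod_eq_coeff, Fin.prod_univ_castSucc, mk_admissibleExponent_last hr,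
    prod_congr rfl fun i _ => mk_admissibleExponent_castSucc r z i, prod_mul_distrib, prod_const,
    card_univ, Fintype.card_fin, Fin.prod_univ_castSucc, ← coeff_mul_C,
    ← coeff_mul_X_pow _ (n + 2) d, add_assoc d]
  congr 1
  ring

/-- The reciprocals `1 / (m₁ + ⋯ + m_{i+1})` of the partial sums of a tuple. -/
noncomputable def invPS {n : ℕ} (mv : Fin n → ℕ) (i : Fin n) : ℝ := (PS mv (i + 1) : ℝ)⁻¹

theorem PS_succ_ne_zero {n : ℕ} (mv : Fin n → ℕ) (i : Fin n) : PS mv (i + 1) ≠ 0 := by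
  simp only [PS, ne_eq, sum_eq_zero_iff, not_forall]
  exact ⟨i, by simp, by simp⟩

theorem LatticePath.prod_stepSign {n : ℕ} (p : LatticePath n) :
    ∏ i, stepSign (p i).1 = (-1) ^ #p.support := by
  rw [LatticePath.support, ← prod_const, prod_filter]
  refine prod_congr rfl fun i _ => ?_
  cases (p i).1 <;> simp [stepSign]

theorem inv_sum_coordDenom {n : ℕ} (p : LatticePath n) (i : Fin n) :
    (∑ b, coordDenom (p.position n true) b (p.position (i + 1) b))⁻¹ =
      slotSeries (maxIndex p.support) (invPS fun j => (p j).2) i := by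
  have hsum : ∑ b, coordDenom (p.position n true) b (p.position (i + 1) b) =
      C (PS (fun j => (p j).2) (i + 1) : ℝ) -
        if p.position (i + 1) true = p.position n true then X else 0 := by
    simp [LatticePath.PS_eq_position, coordDenom]
  rw [hsum, slotSeries, invPS]
  simp only [LatticePath.position_succ_true_eq_iff, ite_not]
  split_ifs
  · rw [sub_zero, C_inv]
  · exact inv_C_sub_X (Nat.cast_ne_zero.2 (PS_succ_ne_zero _ i))

theorem pathSeries_eq {n : ℕ} (p : LatticePath n) :
    pathSeries (p.position n true) p = (-1) ^ #p.support *
      ∏ i : Fin n, slotSeries (maxIndex p.support) (invPS fun j => (p j).2) i := by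
  rw [pathSeries, LatticePath.weight, prod_mul_distrib, LatticePath.prod_stepSign]
  simp only [inv_sum_coordDenom]

theorem neg_coeff_pathSeries_div {n : ℕ} (d : ℕ) (p : LatticePath (n + 1))
    (hp : p.support.Nonempty) :
    -coeff d (pathSeries (p.position (n + 1) true) p) /
        (p.position (n + 1) true + p.position (n + 1) false : ℝ) =
      ∑ kv ∈ Ikr (n + 1) (d + n + 2) (maxIndex p.support),
        (-1) ^ (#p.support - 1) * ∏ i, invPS (fun j => (p j).2) i ^ kv i := by
  have hr : maxIndex p.support ≤ n + 1 := Finset.sup_le fun j _ => j.2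
  have hsign : -(-1 : ℝ) ^ #p.support = (-1) ^ (#p.support - 1) := by
    obtain ⟨c, hc⟩ := Nat.exists_eq_succ_of_ne_zero hp.card_pos.ne'
    simp [hc, pow_succ]
  have hcoeff : coeff d (pathSeries (p.position (n + 1) true) p) = (-1) ^ #p.support *
      coeff d (∏ i, slotSeries (maxIndex p.support) (invPS fun j => (p j).2) i) := by
    rw [pathSeries_eq, ← coeff_C_mul]
    simp
  rw [← mul_sum, sum_Ikr_prod_pow hr, hcoeff, ← neg_mul, hsign, mul_div_assoc, div_eq_mul_inv,
    invPS, Fin.val_last, LatticePath.PS_eq_position, Nat.cast_add]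

end Exponents

/-! ### The double sum over the paths -/

/-- The summand of `m` in the signed sum of `L(𝐤, f, J)` over `𝐤 ∈ I(k, max J)`. It is `0` for
`J = ∅`, which is not part of the sum formula. -/
noncomputable def signedTerm {n : ℕ} (k : ℕ) (f : ℕ → ℂ) (J : Finset (Fin n)) (mv : Fin n → ℕ) :
    ℂ :=
  if J.Nonempty then ∑ kv ∈ Ikr n k (maxIndex J),
    (-1 : ℂ) ^ (#J - 1) *
      (f (∑ j ∈ J, (mv j + 1)) / ∏ i : Fin n, ((PS mv ((i : ℕ) + 1) : ℕ) : ℂ) ^ kv i)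
  else 0

theorem signedTerm_of_mem_endingAt {n : ℕ} (d : ℕ) (f : ℕ → ℂ) {p : LatticePath (n + 1)}
    {N B : ℕ} (hN : N ≠ 0) (hp : p ∈ LatticePath.endingAt (n + 1) fun b => cond b N B) :
    signedTerm (d + n + 2) f p.support (fun i => (p i).2) =
      f N * ((-PowerSeries.coeff d (pathSeries N p) / (N + B) : ℝ) : ℂ) := by
  rw [LatticePath.mem_endingAt] at hp
  have hNp : p.position (n + 1) true = N := congrFun hp true
  have hBp : p.position (n + 1) false = B := congrFun hp false
  have hsum : ∑ j ∈ p.support, ((p j).2 + 1) = N := by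
    rw [← hNp, LatticePath.position_length, LatticePath.support]
  have hne : p.support.Nonempty := LatticePath.support_nonempty_iff.2 (hNp ▸ hN)
  rw [← hBp, ← hNp, neg_coeff_pathSeries_div d p hne, signedTerm, if_pos hne, hsum, hNp]
  rw [Complex.ofReal_sum, mul_sum]
  refine sum_congr rfl fun kv _ => ?_
  simp only [invPS, inv_pow, prod_inv_distrib]
  push_cast
  ring

theorem hasSum_signedTerm {n k : ℕ} {f : ℕ → ℂ}
    (habs : ∀ J : Finset (Fin n), J.Nonempty →
      ∀ kv ∈ Ikr n k (maxIndex J),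
        Summable fun mv : Fin n → ℕ =>
          ‖f (∑ j ∈ J, (mv j + 1)) / ∏ i : Fin n, ((PS mv ((i : ℕ) + 1) : ℕ) : ℂ) ^ kv i‖)
    (J : Finset (Fin n)) :
    HasSum (signedTerm k f J) (if J.Nonempty then
      ∑ kv ∈ Ikr n k (maxIndex J), (-1 : ℂ) ^ (#J - 1) * LVal n kv f J
      else 0) := by
  unfold signedTerm
  split_ifs with hJ
  · exact hasSum_sum fun kv hkv => (habs J hJ kv hkv).of_norm.hasSum.mul_left _
  · exact hasSum_zero

theorem hasSum_signedTerm_endingAt {n d : ℕ} (f : ℕ → ℂ) (N : ℕ) :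
    HasSum (fun B : ℕ => ∑ p ∈ LatticePath.endingAt (n + 1) fun b => cond b N B,
      signedTerm (d + n + 2) f p.support fun i => (p i).2) (f N / (N : ℂ) ^ (d + n + 2)) := by
  rcases eq_or_ne N 0 with rfl | hN
  · have hzero (B : ℕ) (p : LatticePath (n + 1))
        (hp : p ∈ LatticePath.endingAt (n + 1) fun b => cond b 0 B) :
        signedTerm (d + n + 2) f p.support (fun i => (p i).2) = 0 :=
      if_neg (by simp [LatticePath.support_nonempty_iff, LatticePath.mem_endingAt.1 hp])
    simp [sum_congr rfl (hzero _)]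
  · have hval : f N / (N : ℂ) ^ (d + n + 2) = f N * (((N : ℝ)⁻¹ ^ (d + n + 2) : ℝ) : ℂ) := by
      push_cast
      rw [inv_pow, div_eq_mul_inv]
    rw [hval]
    refine ((Complex.hasSum_ofReal.2 (hasSum_neg_coeff_pathSeries_div hN n d)).mul_left
      (f N)).congr_fun fun B => ?_
    rw [sum_congr rfl fun p hp => signedTerm_of_mem_endingAt d f hN hp, ← mul_sum,
      ← Complex.ofReal_sum, sum_div]

/-- The sum formula for the multiple `L`-values conjectured by
Essouabri-Matsumoto-Tsumura. -/
theorem sum_formula_L (n k : ℕ) (hn : 1 ≤ n) (hk : n + 1 ≤ k) (f : ℕ → ℂ)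
    (habs : ∀ J : Finset (Fin n), J.Nonempty →
      ∀ kv ∈ Ikr n k (J.sup fun j => (j : ℕ) + 1),
        Summable fun mv : Fin n → ℕ =>
          ‖f (∑ j ∈ J, (mv j + 1)) / ∏ i : Fin n, ((PS mv ((i : ℕ) + 1) : ℕ) : ℂ) ^ kv i‖)
    (hf : Summable fun m : ℕ => ‖f (m + 1) / ((m + 1 : ℕ) : ℂ) ^ k‖) :
    ∑ J ∈ (Finset.univ : Finset (Fin n)).powerset.filter Finset.Nonempty,
      ∑ kv ∈ Ikr n k (J.sup fun j => (j : ℕ) + 1),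
        (-1 : ℂ) ^ (J.card - 1) * LVal n kv f J
      = ∑' m : ℕ, f (m + 1) / ((m + 1 : ℕ) : ℂ) ^ k := by
  obtain ⟨n, rfl⟩ : ∃ n', n = n' + 1 := Nat.exists_eq_add_of_le' hn
  obtain ⟨d, rfl⟩ : ∃ d, k = d + n + 2 := ⟨k - (n + 2), by lia⟩
  have hpaths := LatticePath.hasSum_support (hasSum_signedTerm habs)
  have hrows :=
    (LatticePath.hasSum_sum_endingAt hpaths).prod_fiberwise (hasSum_signedTerm_endingAt f)
  have htail := (hasSum_nat_add_iff' 1).2 hrows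
  rw [powerset_univ, sum_filter]
  simpa using htail.tsum_eq.symm
end

section
/- Let s, t be non-negative integers and let x₁,…,x_s, y₁,…,y_t be positive real numbers. When (z₁,…,z_{s+t}) runs over all shuffles of (x₁,…,x_s) and (y₁,…,y_t), i.e. arrangements of the s+t values into one sequence preserving the relative order of the x's and of the y's, one has Σ_{(z₁,…,z_{s+t})} 1/(z₁(z₁+z₂)⋯(z₁+⋯+z_{s+t})) = [1/(x₁(x₁+x₂)⋯(x₁+⋯+x_s))] · [1/(y₁(y₁+y₂)⋯(y₁+⋯+y_t))]. -/
open Finset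
open scoped Classical

/-!
Sort the shuffles by whether their last term is an `x` or a `y`. The last factor of every summand is
`1 / (X + Y)`, where `X` and `Y` are the total sums, so by induction the shuffles ending in an `x`
contribute the share `X / (X + Y)` of the right-hand side, and those ending in a `y` the share
`Y / (X + Y)`.
-/

section PrefixSum

variable {M : Type*} [AddCommMonoid M]

/-- The sum `z₁ + ⋯ + zᵢ` of an initial segment of a finite sequence, its last term included. -/
def prefixSum {n : ℕ} (z : Fin n → M) (i : Fin n) : M :=
  ∑ j ∈ Iic i, z j

lemma prefixSum_castSucc {n : ℕ} (z : Fin (n + 1) → M) (i : Fin n) :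
    prefixSum z i.castSucc = prefixSum (Fin.init z) i := by
  rw [prefixSum, ← Fin.map_castSuccEmb_Iic, sum_map]
  rfl

lemma prefixSum_last {n : ℕ} (z : Fin (n + 1) → M) :
    prefixSum z (Fin.last n) = ∑ i, z i := by
  rw [prefixSum, ← Fin.top_eq_last, Iic_top]

lemma prefixSum_pos [PartialOrder M] [IsOrderedCancelAddMonoid M] {n : ℕ} {z : Fin n → M}
    (hz : ∀ i, 0 < z i) (i : Fin n) : 0 < prefixSum z i :=
  sum_pos (fun j _ => hz j) nonempty_Iic

/-- Every denominator occurring in the shuffle summation formula for `x` and `y` is nonzero: the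
partial sums of a shuffle are those of `x`, those of `y`, and sums of one of each. -/
structure PrefixSumsNeZero {s t : ℕ} (x : Fin s → M) (y : Fin t → M) : Prop where
  left (i : Fin s) : prefixSum x i ≠ 0
  right (j : Fin t) : prefixSum y j ≠ 0
  add (i : Fin s) (j : Fin t) : prefixSum x i + prefixSum y j ≠ 0

namespace PrefixSumsNeZero

variable {s t : ℕ}

lemma symm {x : Fin s → M} {y : Fin t → M} (h : PrefixSumsNeZero x y) : PrefixSumsNeZero y x :=
  ⟨h.right, h.left, fun j i => by rw [add_comm]; exact h.add i j⟩

lemma init_left {x : Fin (s + 1) → M} {y : Fin t → M} (h : PrefixSumsNeZero x y) :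
    PrefixSumsNeZero (Fin.init x) y where
  left i := by rw [← prefixSum_castSucc]; exact h.left i.castSucc
  right := h.right
  add i j := by rw [← prefixSum_castSucc]; exact h.add i.castSucc j

lemma sum_left_ne_zero {x : Fin (s + 1) → M} {y : Fin t → M} (h : PrefixSumsNeZero x y) :
    ∑ i, x i ≠ 0 := by
  rw [← prefixSum_last]
  exact h.left (Fin.last s)

lemma sum_add_sum_ne_zero {x : Fin s → M} {y : Fin t → M} (h : PrefixSumsNeZero x y)
    (hst : s + t ≠ 0) : ∑ i, x i + ∑ j, y j ≠ 0 := by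
  match s, t with
  | 0, 0 => exact absurd rfl hst
  | s + 1, 0 => simpa using h.sum_left_ne_zero
  | 0, t + 1 => simpa using h.symm.sum_left_ne_zero
  | s + 1, t + 1 => simpa only [prefixSum_last] using h.add (Fin.last s) (Fin.last t)

end PrefixSumsNeZero

/-- The weight `1 / (z₁ (z₁ + z₂) ⋯ (z₁ + ⋯ + zₙ))` of a finite sequence. -/
def prefixWeight {K : Type*} [Semifield K] {n : ℕ} (z : Fin n → K) : K :=
  ∏ i, (prefixSum z i)⁻¹

lemma prefixWeight_succ {K : Type*} [Semifield K] {n : ℕ} (z : Fin (n + 1) → K) :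
    prefixWeight z = prefixWeight (Fin.init z) * (∑ i, z i)⁻¹ := by
  simp only [prefixWeight, Fin.prod_univ_castSucc, prefixSum_castSucc, prefixSum_last]

end PrefixSum

section Shuffle

variable {n s t : ℕ} {α β : Type*}

/-- `σ` lists the elements of `α ⊕ β` at the positions `0, …, n - 1`, those of `α` and those of `β`
each in increasing order. With `α = Fin s` and `β = Fin t`, the shuffle of `x` and `y` it encodes is
`Sum.elim x y ∘ σ`. -/
def IsShuffle [Preorder α] [Preorder β] (σ : Fin n ≃ α ⊕ β) : Prop :=
  StrictMono (fun a => σ.symm (Sum.inl a)) ∧ StrictMono (fun b => σ.symm (Sum.inr b))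

lemma isShuffle_trans_sumComm [Preorder α] [Preorder β] (σ : Fin n ≃ α ⊕ β) :
    IsShuffle (σ.trans (Equiv.sumComm α β)) ↔ IsShuffle σ :=
  and_comm

lemma IsShuffle.eq_inl_last [Preorder β] {σ : Fin (n + 1) ≃ Fin (s + 1) ⊕ β} (h : IsShuffle σ)
    (hσ : (σ (Fin.last n)).isLeft) : σ (Fin.last n) = Sum.inl (Fin.last s) := by
  obtain ⟨a, ha⟩ := Sum.isLeft_iff.1 hσ
  have last_le : σ.symm (Sum.inl a) ≤ σ.symm (Sum.inl (Fin.last s)) :=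
    h.1.monotone (Fin.le_last a)
  rw [← ha, Equiv.symm_apply_apply, Fin.last_le_iff, Equiv.symm_apply_eq] at last_le
  exact last_le.symm

/-- Adjoining a new element on the left of a disjoint union, as the last index there. -/
def optionSumEquivFinSuccSum (s : ℕ) (β : Type*) : Option (Fin s ⊕ β) ≃ Fin (s + 1) ⊕ β where
  toFun o := o.elim (Sum.inl (Fin.last s)) (Sum.map Fin.castSucc id)
  invFun := Sum.elim (Fin.lastCases none (some ∘ Sum.inl)) (some ∘ Sum.inr)
  left_inv := by rintro (_ | _ | _) <;> simp
  right_inv := by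
    rintro (i | b)
    · induction i using Fin.lastCases <;> simp
    · simp

/-- The listing of `Fin (s + 1) ⊕ β` that follows `σ` and ends with the last element of
`Fin (s + 1)`. On shuffles, this appends a last term to the first sequence and to the shuffle. -/
def appendInl (σ : Fin n ≃ Fin s ⊕ β) : Fin (n + 1) ≃ Fin (s + 1) ⊕ β :=
  (finSuccEquivLast.trans σ.optionCongr).trans (optionSumEquivFinSuccSum s β)

@[simp]
lemma appendInl_last (σ : Fin n ≃ Fin s ⊕ β) :
    appendInl σ (Fin.last n) = Sum.inl (Fin.last s) := by
  simp [appendInl, optionSumEquivFinSuccSum]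

@[simp]
lemma appendInl_castSucc (σ : Fin n ≃ Fin s ⊕ β) (i : Fin n) :
    appendInl σ i.castSucc = Sum.map Fin.castSucc id (σ i) := by
  simp [appendInl, optionSumEquivFinSuccSum]

@[simp]
lemma appendInl_symm_inl_last (σ : Fin n ≃ Fin s ⊕ β) :
    (appendInl σ).symm (Sum.inl (Fin.last s)) = Fin.last n := by
  simp [Equiv.symm_apply_eq]

@[simp]
lemma appendInl_symm_inl_castSucc (σ : Fin n ≃ Fin s ⊕ β) (i : Fin s) :
    (appendInl σ).symm (Sum.inl i.castSucc) = (σ.symm (Sum.inl i)).castSucc := by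
  simp [Equiv.symm_apply_eq]

@[simp]
lemma appendInl_symm_inr (σ : Fin n ≃ Fin s ⊕ β) (b : β) :
    (appendInl σ).symm (Sum.inr b) = (σ.symm (Sum.inr b)).castSucc := by
  simp [Equiv.symm_apply_eq]

lemma isShuffle_appendInl [Preorder β] (σ : Fin n ≃ Fin s ⊕ β) :
    IsShuffle (appendInl σ) ↔ IsShuffle σ := by
  simp [IsShuffle, StrictMono, Fin.forall_fin_succ', Fin.castSucc_lt_last, Fin.le_last]

lemma appendInl_injective :
    Function.Injective (appendInl : (Fin n ≃ Fin s ⊕ β) → (Fin (n + 1) ≃ Fin (s + 1) ⊕ β)) := by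
  intro σ τ h
  ext1 i
  have h_castSucc := Equiv.congr_fun h i.castSucc
  rw [appendInl_castSucc, appendInl_castSucc] at h_castSucc
  exact Sum.map_injective.2 ⟨Fin.castSucc_injective s, Function.injective_id⟩ h_castSucc

lemma exists_optionCongr_eq {e : Option α ≃ Option β} (he : e none = none) :
    ∃ σ : α ≃ β, σ.optionCongr = e := by
  refine ⟨e.removeNone, Equiv.ext ?_⟩
  rintro (_ | a)
  · simp [he]
  · have e_some_ne_none : e (some a) ≠ none := by simp [← he]
    exact e.removeNone_some (Option.ne_none_iff_exists'.1 e_some_ne_none)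

lemma exists_appendInl_eq {τ : Fin (n + 1) ≃ Fin (s + 1) ⊕ β}
    (hτ : τ (Fin.last n) = Sum.inl (Fin.last s)) : ∃ σ, appendInl σ = τ := by
  let e := (finSuccEquivLast.symm.trans τ).trans (optionSumEquivFinSuccSum s β).symm
  have he : e none = none := by simp [e, hτ, optionSumEquivFinSuccSum]
  obtain ⟨σ, hσ⟩ := exists_optionCongr_eq he
  refine ⟨σ, Equiv.ext fun i => ?_⟩
  simp [appendInl, hσ, e]

lemma bijOn_appendInl [Preorder β] :
    Set.BijOn appendInl {σ : Fin n ≃ Fin s ⊕ β | IsShuffle σ}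
      {τ : Fin (n + 1) ≃ Fin (s + 1) ⊕ β | IsShuffle τ ∧ (τ (Fin.last n)).isLeft} := by
  refine ⟨fun σ hσ => ⟨(isShuffle_appendInl σ).2 hσ, by simp⟩, appendInl_injective.injOn, ?_⟩
  rintro τ ⟨hτ, hlast⟩
  obtain ⟨σ, rfl⟩ := exists_appendInl_eq (hτ.eq_inl_last hlast)
  exact ⟨σ, (isShuffle_appendInl σ).1 hτ, rfl⟩

lemma init_elim_comp_appendInl {γ : Type*} (x : Fin (s + 1) → γ) (y : β → γ)
    (σ : Fin n ≃ Fin s ⊕ β) :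
    Fin.init (Sum.elim x y ∘ appendInl σ) = Sum.elim (Fin.init x) y ∘ σ := by
  funext i
  simp only [Fin.init, Function.comp_apply, appendInl_castSucc]
  cases σ i <;> rfl

end Shuffle

section ShuffleSum

variable {K : Type*} [Semifield K] {s t : ℕ}

/-- The left-hand side of the shuffle summation formula. The number `n` of positions is kept apart
from `s + t` so that recursion on it needs no casts; the sum is empty unless `n = s + t`. -/
noncomputable def shuffleSum (n : ℕ) (x : Fin s → K) (y : Fin t → K) : K :=
  ∑ σ : Fin n ≃ Fin s ⊕ Fin t with IsShuffle σ, prefixWeight (Sum.elim x y ∘ σ)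

/-- The part of `shuffleSum (n + 1) x y` coming from the shuffles whose last term belongs to `x`. -/
noncomputable def shuffleSumEndingInl (n : ℕ) (x : Fin s → K) (y : Fin t → K) : K :=
  ∑ σ : Fin (n + 1) ≃ Fin s ⊕ Fin t with IsShuffle σ ∧ (σ (Fin.last n)).isLeft,
    prefixWeight (Sum.elim x y ∘ σ)

lemma sum_ending_inr_eq_shuffleSumEndingInl (n : ℕ) (x : Fin s → K) (y : Fin t → K) :
    ∑ σ : Fin (n + 1) ≃ Fin s ⊕ Fin t with IsShuffle σ ∧ ¬ (σ (Fin.last n)).isLeft,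
      prefixWeight (Sum.elim x y ∘ σ) = shuffleSumEndingInl n y x := by
  let swap : (Fin (n + 1) ≃ Fin s ⊕ Fin t) ≃ (Fin (n + 1) ≃ Fin t ⊕ Fin s) :=
    Equiv.equivCongr (Equiv.refl _) (Equiv.sumComm _ _)
  refine sum_equiv swap (fun σ => ?_) (fun σ _ => ?_)
  · simp [swap, Equiv.equivCongr, isShuffle_trans_sumComm]
  · congr 1
    funext i
    cases hσ : σ i <;> simp [swap, hσ]

lemma shuffleSum_zero (x : Fin 0 → K) (y : Fin 0 → K) : shuffleSum 0 x y = 1 := by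
  have all_isShuffle (σ : Fin 0 ≃ Fin 0 ⊕ Fin 0) : IsShuffle σ :=
    ⟨Subsingleton.strictMono _, Subsingleton.strictMono _⟩
  simp [shuffleSum, prefixWeight, all_isShuffle,
    Fintype.card_equiv (Equiv.equivOfIsEmpty (Fin 0) (Fin 0 ⊕ Fin 0))]

lemma shuffleSum_succ (n : ℕ) (x : Fin s → K) (y : Fin t → K) :
    shuffleSum (n + 1) x y = shuffleSumEndingInl n x y + shuffleSumEndingInl n y x := by
  rw [← sum_ending_inr_eq_shuffleSumEndingInl n x y, shuffleSumEndingInl, shuffleSum,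
    ← sum_filter_add_sum_filter_not _ (fun σ => (σ (Fin.last n)).isLeft),
    filter_filter, filter_filter]

lemma shuffleSumEndingInl_zero (n : ℕ) (x : Fin 0 → K) (y : Fin t → K) :
    shuffleSumEndingInl n x y = 0 := by
  simp [shuffleSumEndingInl, Sum.isLeft_iff]

lemma shuffleSumEndingInl_succ (n : ℕ) (x : Fin (s + 1) → K) (y : Fin t → K) :
    shuffleSumEndingInl n x y = shuffleSum n (Fin.init x) y * (∑ i, x i + ∑ j, y j)⁻¹ := by
  have weight_appendInl (σ : Fin n ≃ Fin s ⊕ Fin t) :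
      prefixWeight (Sum.elim x y ∘ appendInl σ) =
        prefixWeight (Sum.elim (Fin.init x) y ∘ σ) * (∑ i, x i + ∑ j, y j)⁻¹ := by
    rw [prefixWeight_succ, init_elim_comp_appendInl]
    simp only [Function.comp_apply, Equiv.sum_comp (appendInl σ) (Sum.elim x y),
      Fintype.sum_sum_type, Sum.elim_inl, Sum.elim_inr]
  rw [shuffleSum, sum_mul]
  obtain ⟨mapsTo, injOn, surjOn⟩ := bijOn_appendInl (n := n) (s := s) (β := Fin t)
  symm
  refine sum_nbij appendInl (fun σ hσ => ?_) ?_ ?_ (fun σ _ => (weight_appendInl σ).symm)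
  · simpa using mapsTo (by simpa using hσ)
  · simpa using injOn
  · simpa using surjOn

theorem shuffleSum_eq_prefixWeight_mul_prefixWeight {n : ℕ} {x : Fin s → K} {y : Fin t → K}
    (h : PrefixSumsNeZero x y) (hn : s + t = n) :
    shuffleSum n x y = prefixWeight x * prefixWeight y := by
  induction n generalizing s t with
  | zero =>
    obtain ⟨rfl, rfl⟩ := Nat.add_eq_zero_iff.1 hn
    simp [shuffleSum_zero, prefixWeight]
  | succ n ih =>
    have share {s t : ℕ} {x : Fin s → K} {y : Fin t → K} (h : PrefixSumsNeZero x y)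
        (hn : s + t = n + 1) :
        shuffleSumEndingInl n x y =
          prefixWeight x * prefixWeight y * ((∑ i, x i) / (∑ i, x i + ∑ j, y j)) := by
      cases s with
      | zero => simp [shuffleSumEndingInl_zero]
      | succ s =>
        have hX := h.sum_left_ne_zero
        rw [shuffleSumEndingInl_succ, ih h.init_left (by lia), prefixWeight_succ x]
        field_simp
    rw [shuffleSum_succ, share h hn, share h.symm (by lia), mul_comm (prefixWeight y),
      add_comm (∑ j, y j), ← mul_add, ← add_div, div_self (h.sum_add_sum_ne_zero (by lia)), mul_one]

theorem shuffle_sum_general {x : Fin s → K} {y : Fin t → K} (h : PrefixSumsNeZero x y) :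
    ∑ σ : Fin (s + t) ≃ Fin s ⊕ Fin t with
        StrictMono (fun i => σ.symm (Sum.inl i)) ∧ StrictMono (fun j => σ.symm (Sum.inr j)),
      ∏ i, (∑ j ∈ Iic i, Sum.elim x y (σ j))⁻¹ =
    (∏ i, (∑ j ∈ Iic i, x j)⁻¹) * ∏ i, (∑ j ∈ Iic i, y j)⁻¹ := by
  refine Eq.trans ?_ (shuffleSum_eq_prefixWeight_mul_prefixWeight h rfl)
  exact sum_congr (filter_congr fun _ _ => Iff.rfl) fun _ _ => rfl

end ShuffleSum

/-- The shuffle summation formula (Lemma 2.2 of the paper): shuffles of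
`(x₁,…,x_s)` and `(y₁,…,y_t)` are parametrized by equivalences
`σ : Fin (s+t) ≃ Fin s ⊕ Fin t` whose inverse is strictly monotone on each summand;
the shuffled sequence is `z_i = Sum.elim x y (σ i)`. -/
theorem shuffle_sum (s t : ℕ) (x : Fin s → ℝ) (y : Fin t → ℝ)
    (hx : ∀ i, 0 < x i) (hy : ∀ i, 0 < y i) :
    ∑ σ ∈ Finset.univ.filter (fun σ : Fin (s + t) ≃ (Fin s ⊕ Fin t) =>
        StrictMono (fun i : Fin s => σ.symm (Sum.inl i)) ∧
        StrictMono (fun i : Fin t => σ.symm (Sum.inr i))),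
      ∏ i : Fin (s + t), (∑ j ∈ Finset.Iic i, Sum.elim x y (σ j))⁻¹
    = (∏ i : Fin s, (∑ j ∈ Finset.Iic i, x j)⁻¹) *
      (∏ i : Fin t, (∑ j ∈ Finset.Iic i, y j)⁻¹) := by
  exact shuffle_sum_general ⟨fun i => (prefixSum_pos hx i).ne', fun j => (prefixSum_pos hy j).ne',
    fun i j => (add_pos (prefixSum_pos hx i) (prefixSum_pos hy j)).ne'⟩
end

section
/- Let n, m be positive integers with n ≥ 2 and let 1 ≤ l ≤ n. Then Σ_{𝐩=(p_l,…,p_{n−1})∈ℕ≥1^{n−l}} B_{l,n−1}(𝐩) · (1/(p_l+⋯+p_{n−1}) − 1/(m+p_l+⋯+p_{n−1})) = Σ_{1≤q_l≤q_{l+1}≤⋯≤q_{n−1}≤m} 1/(q_l q_{l+1} ⋯ q_{n−1}), where both sides are interpreted as 1 when l = n. -/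
open Finset

/-- `kval n kv j` is `k_j`, the `j`-th (1-indexed) component of the tuple encoded by
`kv : Fin n → ℕ`. -/
def kval (n : ℕ) (kv : Fin n → ℕ) (j : ℕ) : ℕ :=
  if h : j - 1 < n then kv ⟨j - 1, h⟩ else 0

/-- `Bf n l r p = B_{l,r}(𝐩) = 1/(p_l(p_l+p_{l+1})⋯(p_l+⋯+p_{r-1}))`, where
`p : Fin (n-l) → ℕ` encodes the positive integers `(p_l,…,p_{n-1})` via
`p_{l+i} = p i + 1`, so that `p_l + ⋯ + p_{l+j-1} = PS p j`. -/
noncomputable def Bf (n l r : ℕ) (p : Fin (n - l) → ℕ) : ℝ :=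
  ∏ j ∈ Finset.Icc 1 (r - l), ((PS p j : ℕ) : ℝ)⁻¹

/-- `Cf n m l r p kv = C_{l,r}(𝐩,𝐤) = 1/((m+p_l+⋯+p_{r-1})^{k_r}⋯(m+p_l+⋯+p_{n-1})^{k_n})`. -/
noncomputable def Cf (n m l r : ℕ) (p : Fin (n - l) → ℕ) (kv : Fin n → ℕ) : ℝ :=
  ∏ j ∈ Finset.Icc r n, (((m + PS p (j - l) : ℕ) : ℝ) ^ kval n kv j)⁻¹

/-- `Af m l = A_l = ∑_{(p₁,…,p_{l-1}), p₁+⋯+p_{l-1}<m} 1/(p₁(p₁+p₂)⋯(p₁+⋯+p_{l-1}))`. -/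
noncomputable def Af (m l : ℕ) : ℝ :=
  ∑ q ∈ (Fintype.piFinset fun _ : Fin (l - 1) => Finset.range m).filter
      (fun q => (∑ i, (q i + 1)) < m),
    ∏ j ∈ Finset.Icc 1 (l - 1), ((PS q j : ℕ) : ℝ)⁻¹

/-!
Let `p₁, …, p_N` be positive integers with partial sums `s_j = p₁ + ⋯ + p_j`. Since
`1/s - 1/(s + m) = (1/s) · m/(s + m)`, the summand of the theorem is `1/(s₁ ⋯ s_N) · m/(s_N + m)`.
In this form the sum over all tuples makes sense for `N = 0` as well, where it is `1`, and it can be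
evaluated by induction on `N`. Summing over the last entry lets `s_N` run over all integers larger
than `s_{N-1}`, so the sum telescopes to
`∑_{q=1}^m 1/(s_{N-1} + q) = ∑_{q=1}^m (1/q) · q/(s_{N-1} + q)`.
What remains for each `q` is the sum over `(N-1)`-tuples with `q` in place of `m`, and the resulting
recursion is that of the sum over weakly increasing tuples split by the largest entry `q`.
-/

section MonotoneTuples

theorem monotone_snoc_iff {α : Type*} [Preorder α] {N : ℕ} {q : Fin N → α} {a : α} :
    Monotone (Fin.snoc q a : Fin (N + 1) → α) ↔ Monotone q ∧ ∀ i, q i ≤ a := by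
  simp only [Monotone, Fin.forall_fin_succ', Fin.snoc_castSucc, Fin.snoc_last]
  grind [Fin.castSucc_le_castSucc_iff, Fin.le_last, Fin.castSucc_lt_last]

/-- The weakly increasing `N`-tuples with entries in `{0, …, m - 1}`. -/
def monotoneTuples (N m : ℕ) : Finset (Fin N → ℕ) :=
  {q ∈ Fintype.piFinset fun _ : Fin N => range m | Monotone q}

theorem mem_monotoneTuples {N m : ℕ} {q : Fin N → ℕ} :
    q ∈ monotoneTuples N m ↔ (∀ i, q i < m) ∧ Monotone q := by
  simp [monotoneTuples]

theorem snoc_mem_monotoneTuples {N m a : ℕ} {q : Fin N → ℕ} :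
    (Fin.snoc q a : Fin (N + 1) → ℕ) ∈ monotoneTuples (N + 1) m ↔
      a < m ∧ q ∈ monotoneTuples N (a + 1) := by
  simp only [mem_monotoneTuples, monotone_snoc_iff, Fin.forall_fin_succ', Fin.snoc_castSucc,
    Fin.snoc_last, Nat.lt_succ_iff]
  exact ⟨fun ⟨⟨_, ha⟩, hq, hqa⟩ => ⟨ha, hqa, hq⟩,
    fun ⟨ha, hqa, hq⟩ => ⟨⟨fun i => (hqa i).trans_lt ha, ha⟩, hq, hqa⟩⟩

variable {R : Type*} [CommSemiring R]

/-- The complete homogeneous symmetric polynomial of degree `N` in `m` variables, evaluated at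
`w 0, …, w (m - 1)`. Its monomials are indexed by weakly increasing tuples. -/
def completeHomogeneous (w : ℕ → R) (N m : ℕ) : R :=
  ∑ q ∈ monotoneTuples N m, ∏ i, w (q i)

theorem completeHomogeneous_zero (w : ℕ → R) (m : ℕ) : completeHomogeneous w 0 m = 1 := by
  simp [completeHomogeneous, monotoneTuples, Subsingleton.monotone]

theorem completeHomogeneous_succ (w : ℕ → R) (N m : ℕ) :
    completeHomogeneous w (N + 1) m =
      ∑ a ∈ range m, w a * completeHomogeneous w N (a + 1) := by
  simp only [completeHomogeneous, mul_sum, sum_sigma']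
  refine sum_bij' (fun q _ => ⟨q (Fin.last N), Fin.init q⟩) (fun x _ => Fin.snoc x.2 x.1)
    (fun q hq => ?_) (fun x hx => ?_) (fun q _ => Fin.snoc_init_self q) (fun x _ => by simp)
    fun q _ => ?_
  · rw [← Fin.snoc_init_self q, snoc_mem_monotoneTuples] at hq
    simpa using hq
  · simpa [snoc_mem_monotoneTuples] using hx
  · rw [Fin.prod_univ_castSucc, mul_comm]
    rfl

end MonotoneTuples

section Summation

open Filter Topology

theorem inv_mul_div_add_eq_inv_sub_inv {K : Type*} [DivisionRing K] {s m : K} (hs : s ≠ 0)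
    (hsm : s + m ≠ 0) : s⁻¹ * (m / (s + m)) = s⁻¹ - (s + m)⁻¹ := by
  rw [inv_sub_inv' hs hsm, add_sub_cancel_left, div_eq_mul_inv, mul_assoc]

theorem sum_range_sub_add_eq {G : Type*} [AddCommGroup G] (f : ℕ → G) (m k : ℕ) :
    ∑ a ∈ range k, (f a - f (a + m)) = ∑ q ∈ range m, f q - ∑ q ∈ range m, f (q + k) := by
  have hswap := (sum_range_add f k m).symm.trans (add_comm k m ▸ sum_range_add f m k)
  simp only [add_comm _ m, add_comm _ k, sum_sub_distrib]
  rwa [sub_eq_sub_iff_add_eq_add]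

theorem hasSum_sub_add_of_antitone {f : ℕ → ℝ} (hf : Antitone f) (hf₀ : Tendsto f atTop (𝓝 0))
    (m : ℕ) : HasSum (fun a => f a - f (a + m)) (∑ q ∈ range m, f q) := by
  rw [hasSum_iff_tendsto_nat_of_nonneg fun a => sub_nonneg.2 (hf (Nat.le_add_right a m))]
  simp only [sum_range_sub_add_eq]
  have htail : Tendsto (fun k => ∑ q ∈ range m, f (q + k)) atTop (𝓝 0) := by
    simpa using tendsto_finsetSum (range m) fun q _ =>
      hf₀.comp (tendsto_atTop_mono (Nat.le_add_left · q) tendsto_id)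
  simpa using htail.const_sub (∑ q ∈ range m, f q)

theorem hasSum_inv_sub_inv_add {x : ℝ} (hx : 0 < x) (m : ℕ) :
    HasSum (fun a : ℕ => (x + a)⁻¹ - (x + a + m)⁻¹) (∑ q ∈ range m, (x + q)⁻¹) := by
  have hanti : Antitone fun a : ℕ => (x + a)⁻¹ := fun a b hab => by
    beta_reduce
    gcongr
  have hlim : Tendsto (fun a : ℕ => (x + a)⁻¹) atTop (𝓝 0) :=
    tendsto_inv_atTop_zero.comp (tendsto_atTop_add_const_left _ x tendsto_natCast_atTop_atTop)
  simpa [add_assoc] using hasSum_sub_add_of_antitone hanti hlim m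

theorem hasSum_of_hasSum_snoc_of_nonneg {α : Type*} {N : ℕ} {f : (Fin (N + 1) → α) → ℝ}
    {g : (Fin N → α) → ℝ} {c : ℝ} (hf : 0 ≤ f)
    (hfg : ∀ p, HasSum (fun a => f (Fin.snoc p a)) (g p)) (hg : HasSum g c) : HasSum f c := by
  let e : (Σ _ : Fin N → α, α) ≃ (Fin (N + 1) → α) :=
    (Equiv.sigmaEquivProd _ _).trans ((Equiv.prodComm _ _).trans (Fin.snocEquiv fun _ => α))
  have hsummable : Summable (f ∘ e) :=
    (summable_sigma_of_nonneg fun x => hf (e x)).2 ⟨fun p => (hfg p).summable,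
      hg.summable.congr fun p => (hfg p).tsum_eq.symm⟩
  exact e.hasSum_iff.1 (hg.sigma_of_hasSum hfg hsummable)

end Summation

section PartialSums

variable {N : ℕ}

theorem PS_zero (p : Fin N → ℕ) : PS p 0 = 0 := by
  simp [PS]

theorem PS_pos (p : Fin N → ℕ) {j : ℕ} (hN : 0 < N) (hj : 0 < j) : 0 < PS p j :=
  sum_pos (fun _ _ => Nat.succ_pos _) ⟨⟨0, hN⟩, by simpa using hj⟩

theorem PS_snoc_of_le (p : Fin N → ℕ) (a : ℕ) {j : ℕ} (hj : j ≤ N) :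
    PS (Fin.snoc p a : Fin (N + 1) → ℕ) j = PS p j := by
  simp [PS, sum_filter, Fin.sum_univ_castSucc, hj.not_gt]

theorem PS_snoc_last (p : Fin N → ℕ) (a : ℕ) :
    PS (Fin.snoc p a : Fin (N + 1) → ℕ) (N + 1) = PS p N + 1 + a := by
  simp [PS, sum_filter, Fin.sum_univ_castSucc, add_assoc, add_comm a]

/-- The product `1 / (p₁ (p₁ + p₂) ⋯ (p₁ + ⋯ + p_N))` over all partial sums of a tuple, encoded as
for `PS`. It equals `Bf n l n p` when `N = n - l`, but its length is not tied to a subtraction, so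
that induction on `N` is possible. -/
noncomputable def invPartialSumProd (p : Fin N → ℕ) : ℝ :=
  ∏ j ∈ Icc 1 N, (PS p j : ℝ)⁻¹

theorem invPartialSumProd_nonneg (p : Fin N → ℕ) : 0 ≤ invPartialSumProd p :=
  prod_nonneg fun _ _ => by positivity

theorem invPartialSumProd_snoc (p : Fin N → ℕ) (a : ℕ) :
    invPartialSumProd (Fin.snoc p a : Fin (N + 1) → ℕ) =
      invPartialSumProd p * ((PS p N : ℝ) + 1 + a)⁻¹ := by
  rw [invPartialSumProd, prod_Icc_succ_top N.succ_pos, PS_snoc_last, invPartialSumProd]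
  push_cast
  congr 1
  exact prod_congr rfl fun j hj => by rw [PS_snoc_of_le p a (mem_Icc.1 hj).2]

theorem hasSum_invPartialSumProd_snoc_mul_div (p : Fin N → ℕ) (m : ℕ) :
    HasSum
      (fun a : ℕ => invPartialSumProd (Fin.snoc p a : Fin (N + 1) → ℕ) *
        (m / (PS (Fin.snoc p a : Fin (N + 1) → ℕ) (N + 1) + m)))
      (∑ q ∈ range m, (q + 1 : ℝ)⁻¹ *
        (invPartialSumProd p * ((q + 1 : ℕ) / (PS p N + (q + 1 : ℕ))))) := by
  have hterm (a : ℕ) : invPartialSumProd (Fin.snoc p a : Fin (N + 1) → ℕ) *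
      (m / (PS (Fin.snoc p a : Fin (N + 1) → ℕ) (N + 1) + m)) =
        invPartialSumProd p * ((PS p N + 1 + a : ℝ)⁻¹ - (PS p N + 1 + a + m : ℝ)⁻¹) := by
    rw [invPartialSumProd_snoc, PS_snoc_last, mul_assoc]
    push_cast
    rw [inv_mul_div_add_eq_inv_sub_inv (by positivity) (by positivity)]
  have hsum : ∑ q ∈ range m, (q + 1 : ℝ)⁻¹ *
      (invPartialSumProd p * ((q + 1 : ℕ) / (PS p N + (q + 1 : ℕ)))) =
        invPartialSumProd p * ∑ q ∈ range m, (PS p N + 1 + q : ℝ)⁻¹ := by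
    rw [mul_sum]
    refine sum_congr rfl fun q _ => ?_
    push_cast
    field_simp
    ring
  simp only [hterm, hsum]
  exact (hasSum_inv_sub_inv_add (by positivity) m).mul_left _

theorem hasSum_invPartialSumProd_mul_div (N : ℕ) {m : ℕ} (hm : 0 < m) :
    HasSum (fun p : Fin N → ℕ => invPartialSumProd p * (m / (PS p N + m)))
      (completeHomogeneous (fun q => (q + 1 : ℝ)⁻¹) N m) := by
  induction N generalizing m with
  | zero =>
    have hm₀ : (m : ℝ) ≠ 0 := Nat.cast_ne_zero.2 hm.ne'
    simp [completeHomogeneous_zero, invPartialSumProd, PS_zero, hm₀]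
  | succ N ih =>
    rw [completeHomogeneous_succ]
    refine hasSum_of_hasSum_snoc_of_nonneg
      (fun p => mul_nonneg (invPartialSumProd_nonneg p) (by positivity))
      (fun p => hasSum_invPartialSumProd_snoc_mul_div p m) ?_
    exact hasSum_sum fun q _ => (ih q.succ_pos).mul_left _

theorem Bf_mul_inv_sub_inv {n l : ℕ} (hln : l < n) (m : ℕ) (p : Fin (n - l) → ℕ) :
    Bf n l (n - 1) p * ((PS p (n - l) : ℝ)⁻¹ - ((m : ℝ) + PS p (n - l))⁻¹) =
      invPartialSumProd p * (m / (PS p (n - l) + m)) := by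
  have hlen : 0 < n - l := Nat.sub_pos_of_lt hln
  have hpos : (0 : ℝ) < PS p (n - l) := Nat.cast_pos.2 (PS_pos p hlen hlen)
  have hsplit : invPartialSumProd p = Bf n l (n - 1) p * (PS p (n - l) : ℝ)⁻¹ := by
    rw [invPartialSumProd, Bf, Nat.sub_right_comm, ← prod_Ico_mul_eq_prod_Icc hlen,
      Icc_sub_one_right_eq_Ico_of_not_isMin (by simpa using hlen.ne')]
  rw [hsplit, mul_assoc, inv_mul_div_add_eq_inv_sub_inv hpos.ne' (by positivity), add_comm (m : ℝ)]

end PartialSums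

/-- Equation (3.3) of the paper:
`∑_𝐩 B_{l,n-1}(𝐩)·(1/(p_l+⋯+p_{n-1}) - 1/(m+p_l+⋯+p_{n-1}))
  = ∑_{1≤q_l≤⋯≤q_{n-1}≤m} 1/(q_l⋯q_{n-1})`,
both sides being interpreted as `1` when `l = n`.  On the right the tuple
`(q_l,…,q_{n-1})` is encoded by `q : Fin (n-l) → ℕ` with `q_{l+i} = q i + 1`. -/
theorem B_telescoped_sum (n m l : ℕ) (hn : 2 ≤ n) (hm : 1 ≤ m)
    (hl : 1 ≤ l) (hln : l ≤ n) :
    (if l = n then (1 : ℝ)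
     else ∑' p : Fin (n - l) → ℕ,
       Bf n l (n - 1) p *
         (((PS p (n - l) : ℕ) : ℝ)⁻¹ - ((m : ℝ) + ((PS p (n - l) : ℕ) : ℝ))⁻¹))
    = ∑ q ∈ (Fintype.piFinset fun _ : Fin (n - l) => Finset.range m).filter
        (fun q => ∀ i j : Fin (n - l), i ≤ j → q i ≤ q j),
        ∏ i : Fin (n - l), ((q i : ℝ) + 1)⁻¹ := by
  change _ = completeHomogeneous (fun q => (q + 1 : ℝ)⁻¹) (n - l) m
  split_ifs with h
  · rw [h, Nat.sub_self, completeHomogeneous_zero]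
  · rw [tsum_congr (Bf_mul_inv_sub_inv (lt_of_le_of_ne hln h) m)]
    exact (hasSum_invPartialSumProd_mul_div (n - l) hm).tsum_eq
end
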